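/- If F₁,…,F_t are finite sets of size at most m such that no m+1 of them are disjointly representable, and additionally F_i ∩ F_j ≠ ∅ for all i, j, then t ≤ C(2m-1, m). -/

import Mathlib

def DisjRep {α : Type*} {k : ℕ} (A : Fin k → Finset α) : Prop :=
  ∃ x : Fin k → α, ∀ i j, x i ∈ A j ↔ i = j

/-!
Delete from `⋃ j, F j` the set `F i` and shrink the rest to a minimal set `E i` meeting every member
not contained in `F i`. Each point of `E i` is then the only point of `E i` in some member, so the
points of `E i` disjointly represent `#(E i)` members, whence `#(E i) ≤ m`. Ordered along a linear
extension of inclusion, the pairs `(F i, E i)` are skew: an earlier `E i` meets every later `F j`.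
As the `F i` meet each other, the swapped pairs in reverse order may be put in front, and the skew
Bollobás inequality applied to all of them gives `2 t ≤ (2 * m).choose m`.

The skew inequality itself is an independence argument. Label points by distinct nonzero
scalars. A set `A` becomes the coefficient vector of the polynomial with root set `A`, and `B`
becomes the product of the linear forms "evaluate at `e`" over `e ∈ B`, a form of degree `b` in
`a + 1` variables that vanishes at that vector exactly when `A` meets `B`.
-/

section LinearAlgebra

theorem linearIndependent_of_triangular {R M ι : Type*} [CommRing R] [NoZeroDivisors R]
    [AddCommGroup M] [Module R M] [LinearOrder ι] {v : ι → M} {φ : ι → Module.Dual R M}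
    (hdiag : ∀ i, φ i (v i) ≠ 0) (hlt : ∀ i j, i < j → φ j (v i) = 0) :
    LinearIndependent R v := by
  rw [linearIndependent_iff]
  intro g hg
  by_contra hne
  have hsupp : g.support.Nonempty := Finsupp.support_nonempty_iff.mpr hne
  set j := g.support.max' hsupp
  have hj : j ∈ g.support := g.support.max'_mem hsupp
  have hφ : φ j (Finsupp.linearCombination R v g) = g j * φ j (v j) := by
    rw [Finsupp.linearCombination_apply, Finsupp.sum, map_sum, Finset.sum_eq_single_of_mem j hj]
    · simp only [map_smul, smul_eq_mul]
    · intro i hi hij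
      rw [map_smul, hlt i j ((g.support.le_max' i hi).lt_of_ne hij), smul_zero]
  rw [hg, map_zero] at hφ
  exact mul_ne_zero (Finsupp.mem_support_iff.mp hj) (hdiag j) hφ.symm

theorem finrank_homogeneousSubmodule (σ R : Type*) [Fintype σ] [CommSemiring R]
    [StrongRankCondition R] (n : ℕ) :
    Module.finrank R (MvPolynomial.homogeneousSubmodule σ R n) =
      (Fintype.card σ + n - 1).choose n := by
  classical
  rw [MvPolynomial.homogeneousSubmodule_eq_finsupp_supported, ← MvPolynomial.restrictSupport,
    Module.finrank_eq_nat_card_basis (MvPolynomial.basisRestrictSupport R _),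
    ← Sym.card_sym_eq_choose, ← Nat.card_eq_fintype_card]
  exact Nat.card_congr (Sym.equivNatSum σ n).symm

end LinearAlgebra

section TestForms

open Polynomial Lagrange

variable {R α : Type*}

section CommSemiring

variable [CommSemiring R]

/-- The linear form on coefficient vectors of polynomials of degree at most `a` that evaluates the
polynomial at `r`. -/
noncomputable def evalForm (a : ℕ) (r : R) : MvPolynomial (Fin (a + 1)) R :=
  ∑ l : Fin (a + 1), MvPolynomial.C (r ^ (l : ℕ)) * MvPolynomial.X l

theorem isHomogeneous_evalForm (a : ℕ) (r : R) : (evalForm a r).IsHomogeneous 1 :=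
  MvPolynomial.IsHomogeneous.sum _ _ _ fun l _ => MvPolynomial.isHomogeneous_C_mul_X _ l

theorem eval_coeff_evalForm {a : ℕ} {p : R[X]} (hp : p.natDegree ≤ a) (r : R) :
    MvPolynomial.eval (fun l : Fin (a + 1) => p.coeff l) (evalForm a r) = p.eval r := by
  rw [eval_eq_sum_range' (Nat.lt_succ_of_le hp),
    ← Fin.sum_univ_eq_sum_range fun l => p.coeff l * r ^ l]
  simp only [evalForm, map_sum, map_mul, MvPolynomial.eval_C, MvPolynomial.eval_X, mul_comm]

/-- The form of degree `b` attached to a set `B` with at most `b` elements labelled by `s`: it tests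
whether a polynomial of degree at most `a` vanishes at the label of some element of `B`. Evaluation
at `0`, which is not to be a label, pads the degree to exactly `b`. -/
noncomputable def testForm (a b : ℕ) (s : α → R) (B : Finset α) : MvPolynomial (Fin (a + 1)) R :=
  (∏ e ∈ B, evalForm a (s e)) * evalForm a 0 ^ (b - B.card)

theorem isHomogeneous_testForm (a : ℕ) {b : ℕ} (s : α → R) {B : Finset α} (hB : B.card ≤ b) :
    (testForm a b s B).IsHomogeneous b := by
  have hprod : (∏ e ∈ B, evalForm a (s e)).IsHomogeneous B.card := by
    simpa using MvPolynomial.IsHomogeneous.prod B _ (fun _ => 1) fun e _ =>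
      isHomogeneous_evalForm a (s e)
  have hpad : (evalForm a (0 : R) ^ (b - B.card)).IsHomogeneous (b - B.card) := by
    simpa using (isHomogeneous_evalForm a (0 : R)).pow (b - B.card)
  simpa only [testForm, Nat.add_sub_cancel' hB] using hprod.mul hpad

end CommSemiring

variable [CommRing R] [IsDomain R]

theorem eval_nodal_eq_zero_iff {s : α → R} {A : Finset α} {r : R} :
    (nodal A s).eval r = 0 ↔ ∃ e ∈ A, s e = r := by
  simp only [eval_nodal, Finset.prod_eq_zero_iff, sub_eq_zero, eq_comm (a := r)]

theorem eval_coeff_nodal_testForm_eq_zero_iff {s : α → R} (hs : Function.Injective s)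
    (hs0 : ∀ e, s e ≠ 0) {a : ℕ} (b : ℕ) {A : Finset α} (hA : A.card ≤ a) (B : Finset α) :
    MvPolynomial.eval (fun l : Fin (a + 1) => (nodal A s).coeff l) (testForm a b s B) = 0 ↔
      ¬ Disjoint A B := by
  have hdeg : (nodal A s).natDegree ≤ a := natDegree_nodal.trans_le hA
  have hpad : (nodal A s).eval 0 ≠ 0 := fun h =>
    let ⟨e, _, he⟩ := eval_nodal_eq_zero_iff.mp h
    hs0 e he
  rw [disjoint_comm, Finset.not_disjoint_iff]
  simp only [testForm, map_mul, map_prod, map_pow, eval_coeff_evalForm hdeg, mul_eq_zero,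
    pow_ne_zero _ hpad, or_false, Finset.prod_eq_zero_iff, eval_nodal_eq_zero_iff, hs.eq_iff,
    exists_eq_right]

theorem linearIndependent_testForm {ι : Type*} [LinearOrder ι] {s : α → R}
    (hs : Function.Injective s) (hs0 : ∀ e, s e ≠ 0) {a : ℕ} (b : ℕ) {A B : ι → Finset α}
    (hA : ∀ i, (A i).card ≤ a) (hdisj : ∀ i, Disjoint (A i) (B i))
    (hskew : ∀ i j, i < j → ¬ Disjoint (A j) (B i)) :
    LinearIndependent R fun i => testForm a b s (B i) := by
  let φ : ι → Module.Dual R (MvPolynomial (Fin (a + 1)) R) := fun j =>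
    (MvPolynomial.aeval fun l : Fin (a + 1) => (nodal (A j) s).coeff l).toLinearMap
  have hφ : ∀ i j, φ j (testForm a b s (B i)) = 0 ↔ ¬ Disjoint (A j) (B i) := fun i j =>
    eval_coeff_nodal_testForm_eq_zero_iff hs hs0 b (hA j) (B i)
  exact linearIndependent_of_triangular (φ := φ) (fun i h => (hφ i i).mp h (hdisj i))
    fun i j hij => (hφ i j).mpr (hskew i j hij)

end TestForms

section SetPairs

variable {α ι : Type*} [Fintype ι] [LinearOrder ι] {A B : ι → Finset α}

theorem skew_bollobas {a b : ℕ} (hA : ∀ i, (A i).card ≤ a) (hB : ∀ i, (B i).card ≤ b)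
    (hdisj : ∀ i, Disjoint (A i) (B i)) (hskew : ∀ i j, i < j → ¬ Disjoint (A j) (B i)) :
    Fintype.card ι ≤ (a + b).choose b := by
  let R := MvPolynomial α ℤ
  let V := MvPolynomial.homogeneousSubmodule (Fin (a + 1)) R b
  have : Module.Finite R V :=
    Module.Finite.iff_fg.mpr (MvPolynomial.homogeneousSubmodule_fg (Fin (a + 1)) R b)
  let v : ι → V := fun i => ⟨testForm a b MvPolynomial.X (B i), isHomogeneous_testForm a _ (hB i)⟩
  have hv : LinearIndependent R v := .of_comp V.subtype <|
    linearIndependent_testForm MvPolynomial.X_injective MvPolynomial.X_ne_zero b hA hdisj hskew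
  calc Fintype.card ι ≤ Module.finrank R V := hv.fintype_card_le_finrank
    _ = (a + b).choose b := by
      rw [finrank_homogeneousSubmodule, Fintype.card_fin, Nat.add_right_comm, Nat.add_sub_cancel]

theorem two_mul_card_le_centralBinom_of_skew_of_intersecting {m : ℕ} (hA : ∀ i, (A i).card ≤ m)
    (hB : ∀ i, (B i).card ≤ m) (hdisj : ∀ i, Disjoint (A i) (B i))
    (hskew : ∀ i j, i < j → ¬ Disjoint (A j) (B i)) (hint : ∀ i j, ¬ Disjoint (A i) (A j)) :
    2 * Fintype.card ι ≤ m.centralBinom := by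
  let L : ιᵒᵈ ⊕ₗ ι → Finset α := fun i => Sum.elim (B ∘ OrderDual.ofDual) A (ofLex i)
  let M : ιᵒᵈ ⊕ₗ ι → Finset α := fun i => Sum.elim (A ∘ OrderDual.ofDual) B (ofLex i)
  have hdouble : Fintype.card (ιᵒᵈ ⊕ₗ ι) ≤ (m + m).choose m := by
    refine skew_bollobas (A := L) (B := M) ?_ ?_ ?_ ?_
    · rintro (i | i)
      exacts [hB _, hA _]
    · rintro (i | i)
      exacts [hA _, hB _]
    · rintro (i | i)
      exacts [(hdisj _).symm, hdisj _]
    · rintro (i | i) (j | j) hij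
      · exact fun h => hskew _ _ (OrderDual.ofDual_lt_ofDual.mpr (Sum.Lex.inl_lt_inl_iff.mp hij))
          h.symm
      · exact hint _ _
      · exact absurd hij Sum.Lex.not_inr_lt_inl
      · exact hskew _ _ (Sum.Lex.inr_lt_inr_iff.mp hij)
  rwa [Fintype.card_lex, Fintype.card_sum, Fintype.card_orderDual, ← two_mul, ← two_mul,
    ← Nat.centralBinom_eq_two_mul_choose] at hdouble

end SetPairs

section Transversals

theorem DisjRep.injective {α : Type*} {k : ℕ} {A : Fin k → Finset α} (hA : DisjRep A) :
    Function.Injective A := by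
  obtain ⟨x, hx⟩ := hA
  intro i j hij
  exact (hx i j).mp (hij ▸ (hx i i).mpr rfl)

variable {α ι : Type*} {F : ι → Finset α} {E : Finset α}

/-- `E` is a transversal (hitting set) of the family `F`: it meets every member, possibly in more
than one point. -/
def IsTransversal (F : ι → Finset α) (E : Finset α) : Prop :=
  ∀ i, ¬ Disjoint (F i) E

theorem exists_private_member_of_minimal_isTransversal (hE : Minimal (IsTransversal F) E) {e : α}
    (he : e ∈ E) : ∃ i, ∀ e' ∈ E, e' ∈ F i ↔ e' = e := by
  classical
  have hnot : ¬ IsTransversal F (E.erase e) := hE.not_prop_of_lt (Finset.erase_ssubset he)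
  obtain ⟨i, hi⟩ : ∃ i, Disjoint (F i) (E.erase e) := by simpa [IsTransversal] using hnot
  have hother : ∀ e' ∈ E, e' ∈ F i → e' = e := fun e' he' hF =>
    by_contra fun hne => Finset.disjoint_left.mp hi hF (Finset.mem_erase.mpr ⟨hne, he'⟩)
  obtain ⟨e₀, hF₀, he₀⟩ := Finset.not_disjoint_iff.mp (hE.prop i)
  obtain rfl := hother e₀ he₀ hF₀
  exact ⟨i, fun e' he' => ⟨hother e' he', fun h => h ▸ hF₀⟩⟩

theorem exists_disjRep_of_minimal_isTransversal (hE : Minimal (IsTransversal F) E) {k : ℕ}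
    (hk : k ≤ E.card) : ∃ g : Fin k → ι, DisjRep (F ∘ g) := by
  choose g hg using fun e : E => exists_private_member_of_minimal_isTransversal hE e.2
  obtain ⟨x⟩ : Nonempty (Fin k ↪ E) := Function.Embedding.nonempty_of_card_le (by simpa using hk)
  refine ⟨g ∘ x, fun i => x i, fun i j => ?_⟩
  rw [Function.comp_apply, Function.comp_apply, hg _ _ (x i).2, Subtype.coe_inj,
    x.injective.eq_iff]

theorem exists_minimal_isTransversal_disjoint [Finite ι] {C : Finset α}
    (hC : ∀ i, ¬ F i ⊆ C) : ∃ E, Minimal (IsTransversal F) E ∧ Disjoint C E := by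
  classical
  cases nonempty_fintype ι
  have hP : IsTransversal F (Finset.univ.biUnion F \ C) := fun i => by
    obtain ⟨e, heF, heC⟩ := Finset.not_subset.mp (hC i)
    have heU : e ∈ Finset.univ.biUnion F := Finset.mem_biUnion.mpr ⟨i, Finset.mem_univ i, heF⟩
    exact Finset.not_disjoint_iff.mpr ⟨e, heF, Finset.mem_sdiff.mpr ⟨heU, heC⟩⟩
  obtain ⟨E, hsub, hE⟩ := exists_minimal_le_of_wellFoundedLT _ _ hP
  exact ⟨E, hE, Finset.disjoint_sdiff.mono_right hsub⟩

theorem exists_card_le_disjoint_of_not_disjRep [Finite ι] {m : ℕ}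
    (hF : ∀ g : Fin (m + 1) → ι, ¬ DisjRep (F ∘ g)) (C : Finset α) :
    ∃ E : Finset α, E.card ≤ m ∧ Disjoint C E ∧ ∀ i, ¬ F i ⊆ C → ¬ Disjoint (F i) E := by
  obtain ⟨E, hE, hCE⟩ := exists_minimal_isTransversal_disjoint
    (F := fun i : {i // ¬ F i ⊆ C} => F i) (C := C) fun i => i.2
  refine ⟨E, ?_, hCE, fun i hi => hE.prop ⟨i, hi⟩⟩
  by_contra! hcard
  obtain ⟨g, hg⟩ := exists_disjRep_of_minimal_isTransversal hE (Nat.succ_le_of_lt hcard)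
  exact hF (fun k => g k) hg

end Transversals

theorem centralBinom_le_two_mul_choose (m : ℕ) :
    m.centralBinom ≤ 2 * (2 * m - 1).choose m := by
  cases m with
  | zero => decide
  | succ k =>
    rw [Nat.centralBinom_eq_two_mul_choose, show 2 * (k + 1) = 2 * k + 1 + 1 by ring,
      Nat.choose_succ_succ, ← Nat.choose_symm_half, ← two_mul, Nat.add_sub_cancel]

theorem enatCard_le_of_forall_finset_card_le {ι : Type*} {n : ℕ}
    (h : ∀ s : Finset ι, s.card ≤ n) : ENat.card ι ≤ n := by
  cases finite_or_infinite ι with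
  | inl _ =>
    cases nonempty_fintype ι
    simpa using h Finset.univ
  | inr _ =>
    obtain ⟨s, hs⟩ := Infinite.exists_subset_card_eq ι (n + 1)
    exact absurd (h s) (by omega)

theorem stmt_8_general {α ι : Type*} {m : ℕ} {F : ι → Finset α} (hinj : Function.Injective F)
    (hcard : ∀ i, (F i).card ≤ m) (hint : ∀ i j, ¬ Disjoint (F i) (F j))
    (hF : ∀ g : Fin (m + 1) → ι, ¬ DisjRep (F ∘ g)) :
    ENat.card ι ≤ (2 * m - 1).choose m := by
  refine enatCard_le_of_forall_finset_card_le fun s => ?_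
  choose E hEcard hEdisj hEmeet using fun i : s =>
    exists_card_le_disjoint_of_not_disjRep (F := fun j : s => F j) (fun g => hF fun k => g k) (F i)
  let _ : LinearOrder s := LinearOrder.lift' (fun i : s => toLinearExtension (F i))
    (hinj.comp Subtype.val_injective)
  have hskew : ∀ i j : s, i < j → ¬ Disjoint (F j) (E i) := fun i j hij =>
    hEmeet i j fun hsub => hij.not_ge (toLinearExtension.monotone hsub)
  have hdouble := two_mul_card_le_centralBinom_of_skew_of_intersecting
    (fun i : s => hcard i) hEcard hEdisj hskew fun i j => hint i j
  rw [Fintype.card_coe] at hdouble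
  have := centralBinom_le_two_mul_choose m
  omega

theorem stmt_8 {α : Type*} [DecidableEq α] (t m : ℕ)
    (F : Fin t → Finset α) (hinj : Function.Injective F)
    (hcard : ∀ i, (F i).card ≤ m)
    (hint : ∀ i j, (F i ∩ F j).Nonempty)
    (hnoDR : ¬ ∃ g : Fin (m + 1) → Fin t,
      Function.Injective g ∧ DisjRep (F ∘ g)) :
    t ≤ Nat.choose (2 * m - 1) m := by
  simpa using stmt_8_general hinj hcard
    (fun i j => Finset.not_disjoint_iff_nonempty_inter.mpr (hint i j))
    fun g hg => hnoDR ⟨g, hg.injective.of_comp, hg⟩
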